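/- Let K^{BTBM}_t(x) be the 1-dimensional BTBM density. There is a constant C such that for all t > 0 and all z ∈ ℝ, ∫₀^t ∫_ℝ [K^{BTBM}_s(x) − K^{BTBM}_s(x+z)]² dx ds ≤ C |z|² t^{p} for some exponent p ∈ [0,1). -/

import Mathlib

/-!
Write `p t` for the Gaussian density of variance `t`, so that the BTBM density at time `s` is twice
the mixture of the `p u` over `u > 0` with weight `p s u`. The semigroup identity gives
`‖p u - p u (· + z)‖₂² = 2 (p (2u) 0 - p (2u) z)`, which is at most a constant times
`z² u^(-3/2)`. Minkowski's integral inequality carries this over to the mixture: the `L²` modulus of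
continuity at time `s` is at most a constant times `|z| ∫ u^(-3/4) p s u du`, and the integral, a
finite Gaussian moment, is proportional to `s^(-3/8)`. Its square `s^(-3/4)` is integrable at `0`,
which gives the exponent `1/4` in `t`.
-/

open Real MeasureTheory Set

noncomputable def btbmK1 (s x : ℝ) : ℝ :=
  2 * ∫ u in Ioi (0:ℝ),
      (2 * π * u) ^ (-(1:ℝ)/2) * Real.exp (-x^2 / (2*u)) *
        ((2 * π * s) ^ (-(1:ℝ)/2) * Real.exp (-u^2 / (2*s)))

section Minkowski

variable {α β E : Type*} [MeasurableSpace α] [MeasurableSpace β] [NormedAddCommGroup E]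
  {μ : Measure α} {ν : Measure β}

lemma eLpNorm_two_sq {ε : Type*} [TopologicalSpace ε] [ContinuousENorm ε] (f : α → ε) :
    eLpNorm f 2 μ ^ 2 = ∫⁻ x, ‖f x‖ₑ ^ 2 ∂μ := by
  simpa using eLpNorm_nnreal_pow_eq_lintegral (f := f) (μ := μ) (p := 2) two_ne_zero

lemma eLpNorm_two_le_ofReal_iff {f : α → ℝ} (hf : MemLp f 2 μ) {c : ℝ} (hc : 0 ≤ c) :
    eLpNorm f 2 μ ≤ ENNReal.ofReal c ↔ ∫ x, f x ^ 2 ∂μ ≤ c ^ 2 := by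
  rw [← ENNReal.pow_le_pow_left_iff two_ne_zero, eLpNorm_two_sq, ← ENNReal.ofReal_pow hc,
    ← ENNReal.ofReal_le_ofReal_iff (sq_nonneg c),
    ofReal_integral_eq_lintegral_ofReal hf.integrable_sq (ae_of_all _ fun x => sq_nonneg _)]
  simp only [← enorm_pow, Real.enorm_of_nonneg (sq_nonneg _)]

lemma lintegral_sq_lintegral_eq [SFinite μ] [SFinite ν] {F : α → β → ENNReal}
    (hF : Measurable (Function.uncurry F)) :
    ∫⁻ x, (∫⁻ u, F x u ∂ν) ^ 2 ∂μ = ∫⁻ u, ∫⁻ v, ∫⁻ x, F x u * F x v ∂μ ∂ν ∂ν := by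
  have hFx (x : α) : Measurable (F x) := hF.of_uncurry_left
  calc ∫⁻ x, (∫⁻ u, F x u ∂ν) ^ 2 ∂μ
      = ∫⁻ x, ∫⁻ u, ∫⁻ v, F x u * F x v ∂ν ∂ν ∂μ := by
        simp_rw [sq, ← lintegral_lintegral_mul (hFx _).aemeasurable (hFx _).aemeasurable]
    _ = ∫⁻ u, ∫⁻ x, ∫⁻ v, F x u * F x v ∂ν ∂μ ∂ν := lintegral_lintegral_swap (by fun_prop)
    _ = ∫⁻ u, ∫⁻ v, ∫⁻ x, F x u * F x v ∂μ ∂ν ∂ν :=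
        lintegral_congr fun u => lintegral_lintegral_swap (by fun_prop)

/- Minkowski's integral inequality with exponent `2`: once the square of the inner integral is
expanded into a double integral, Tonelli reduces it to Cauchy–Schwarz for each pair of sections. -/
lemma lintegral_sq_lintegral_le [SFinite μ] [SFinite ν] {F : α → β → ENNReal}
    (hF : Measurable (Function.uncurry F)) :
    ∫⁻ x, (∫⁻ u, F x u ∂ν) ^ 2 ∂μ ≤ (∫⁻ u, (∫⁻ x, F x u ^ 2 ∂μ) ^ (1 / 2 : ℝ) ∂ν) ^ 2 := by
  have hFu (u : β) : AEMeasurable (fun x => F x u) μ := hF.of_uncurry_right.aemeasurable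
  have hN : AEMeasurable (fun u => (∫⁻ x, F x u ^ 2 ∂μ) ^ (1 / 2 : ℝ)) ν := by fun_prop
  rw [lintegral_sq_lintegral_eq hF, sq, ← lintegral_lintegral_mul hN hN]
  gcongr with u v
  simpa only [Pi.mul_apply, ENNReal.rpow_two] using
    ENNReal.lintegral_mul_le_Lp_mul_Lq μ Real.HolderConjugate.two_two (hFu u) (hFu v)

lemma eLpNorm_two_integral_le_lintegral_eLpNorm [NormedSpace ℝ E] [SFinite μ] [SFinite ν]
    {F : α → β → E} (hF : StronglyMeasurable (Function.uncurry F)) :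
    eLpNorm (fun x => ∫ u, F x u ∂ν) 2 μ ≤ ∫⁻ u, eLpNorm (fun x => F x u) 2 μ ∂ν := by
  have eLpNorm_eq (u : β) :
      eLpNorm (fun x => F x u) 2 μ = (∫⁻ x, ‖F x u‖ₑ ^ 2 ∂μ) ^ (1 / 2 : ℝ) := by
    rw [← eLpNorm_two_sq, ← ENNReal.rpow_natCast, ← ENNReal.rpow_mul]
    norm_num
  rw [← ENNReal.pow_le_pow_left_iff two_ne_zero, eLpNorm_two_sq]
  simp_rw [eLpNorm_eq]
  calc ∫⁻ x, ‖∫ u, F x u ∂ν‖ₑ ^ 2 ∂μ ≤ ∫⁻ x, (∫⁻ u, ‖F x u‖ₑ ∂ν) ^ 2 ∂μ := by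
        gcongr
        exact enorm_integral_le_lintegral_enorm _
    _ ≤ _ := lintegral_sq_lintegral_le hF.enorm

end Minkowski

/-- The transition density of one-dimensional Brownian motion: the centred Gaussian density of
variance `t`. Unlike in `ProbabilityTheory.gaussianPDFReal`, `t` is a real number, since the BTBM
density integrates over the time; the formula is meant for `0 < t`. -/
noncomputable def heatKernel (t x : ℝ) : ℝ :=
  (2 * π * t) ^ (-(1:ℝ)/2) * Real.exp (-x^2 / (2*t))

section HeatKernel

variable {t u v q : ℝ}

@[fun_prop]
lemma measurable_uncurry_heatKernel : Measurable (Function.uncurry heatKernel) := by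
  unfold heatKernel Function.uncurry
  fun_prop

lemma heatKernel_zero_right (t : ℝ) : heatKernel t 0 = (2 * π * t) ^ (-(1:ℝ)/2) := by
  simp [heatKernel]

lemma heatKernel_nonneg (ht : 0 ≤ t) (x : ℝ) : 0 ≤ heatKernel t x := by
  unfold heatKernel
  positivity

lemma heatKernel_le_heatKernel_zero (ht : 0 ≤ t) (x : ℝ) : heatKernel t x ≤ heatKernel t 0 := by
  rw [heatKernel_zero_right]
  refine mul_le_of_le_one_right (by positivity) (Real.exp_le_one_iff.2 ?_)
  rw [neg_div, neg_nonpos]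
  positivity

lemma heatKernel_zero_sub_le (ht : 0 ≤ t) (x : ℝ) :
    heatKernel t 0 - heatKernel t x ≤ x ^ 2 / (2 * t) * heatKernel t 0 := by
  have hexp : 1 - x ^ 2 / (2 * t) ≤ Real.exp (-x ^ 2 / (2 * t)) := by
    rw [neg_div]
    exact Real.one_sub_le_exp_neg _
  have hmul := mul_le_mul_of_nonneg_left hexp (heatKernel_nonneg ht 0)
  rw [heatKernel_zero_right] at hmul ⊢
  unfold heatKernel
  linarith

lemma integrable_heatKernel (ht : 0 < t) : Integrable (heatKernel t) := by
  have hb : 0 < (2 * t)⁻¹ := by positivity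
  convert (integrable_exp_neg_mul_sq hb).const_mul ((2 * π * t) ^ (-(1:ℝ)/2)) using 2 with x
  rw [heatKernel, show -x ^ 2 / (2 * t) = -(2 * t)⁻¹ * x ^ 2 by ring]

lemma integral_heatKernel (ht : 0 < t) : ∫ x, heatKernel t x = 1 := by
  have hexp (x : ℝ) : -x ^ 2 / (2 * t) = -(2 * t)⁻¹ * x ^ 2 := by ring
  simp_rw [heatKernel, hexp, integral_const_mul, integral_gaussian, div_inv_eq_mul]
  rw [Real.sqrt_eq_rpow, show π * (2 * t) = 2 * π * t by ring, ← Real.rpow_add (by positivity)]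
  norm_num

lemma heatKernel_mul_heatKernel_add (hu : 0 < u) (hv : 0 < v) (x z : ℝ) :
    heatKernel u x * heatKernel v (x + z)
      = heatKernel (u + v) z * heatKernel (u * v / (u + v)) (x + u * z / (u + v)) := by
  have hcoeff : (2 * π * u) * (2 * π * v) = (2 * π * (u + v)) * (2 * π * (u * v / (u + v))) := by
    field_simp
  have hexp : -x ^ 2 / (2 * u) + -(x + z) ^ 2 / (2 * v) = -z ^ 2 / (2 * (u + v)) +
      -(x + u * z / (u + v)) ^ 2 / (2 * (u * v / (u + v))) := by
    field_simp
    ring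
  unfold heatKernel
  rw [mul_mul_mul_comm, ← Real.mul_rpow (by positivity) (by positivity), ← Real.exp_add, hcoeff,
    hexp, Real.mul_rpow (by positivity) (by positivity), Real.exp_add, mul_mul_mul_comm]

lemma integrable_heatKernel_mul_heatKernel_add (hu : 0 < u) (hv : 0 < v) (z : ℝ) :
    Integrable fun x => heatKernel u x * heatKernel v (x + z) := by
  simp_rw [heatKernel_mul_heatKernel_add hu hv]
  exact ((integrable_heatKernel (by positivity)).comp_add_right _).const_mul _

lemma integral_heatKernel_mul_heatKernel_add (hu : 0 < u) (hv : 0 < v) (z : ℝ) :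
    ∫ x, heatKernel u x * heatKernel v (x + z) = heatKernel (u + v) z := by
  simp_rw [heatKernel_mul_heatKernel_add hu hv, integral_const_mul]
  rw [integral_add_right_eq_self (heatKernel _), integral_heatKernel (by positivity), mul_one]

lemma memLp_two_heatKernel (ht : 0 < t) : MemLp (heatKernel t) 2 := by
  rw [memLp_two_iff_integrable_sq (by fun_prop)]
  simpa [sq] using integrable_heatKernel_mul_heatKernel_add ht ht 0

lemma memLp_two_heatKernel_sub (ht : 0 < t) (z : ℝ) :
    MemLp (fun x => heatKernel t x - heatKernel t (x + z)) 2 :=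
  (memLp_two_heatKernel ht).sub
    ((memLp_two_heatKernel ht).comp_measurePreserving (measurePreserving_add_right volume z))

lemma integral_sq_heatKernel (ht : 0 < t) : ∫ x, heatKernel t x ^ 2 = heatKernel (t + t) 0 := by
  simpa [sq] using integral_heatKernel_mul_heatKernel_add ht ht 0

lemma integral_sq_heatKernel_sub (ht : 0 < t) (z : ℝ) :
    ∫ x, (heatKernel t x - heatKernel t (x + z)) ^ 2
      = 2 * (heatKernel (t + t) 0 - heatKernel (t + t) z) := by
  have hsq : Integrable fun x => heatKernel t x ^ 2 := (memLp_two_heatKernel ht).integrable_sq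
  have hshift : Integrable fun x => heatKernel t (x + z) ^ 2 := hsq.comp_add_right z
  have hsum : Integrable fun x => heatKernel t x ^ 2 + heatKernel t (x + z) ^ 2 := hsq.add hshift
  have hcross := integrable_heatKernel_mul_heatKernel_add ht ht z
  calc ∫ x, (heatKernel t x - heatKernel t (x + z)) ^ 2
      = ∫ x, (heatKernel t x ^ 2 + heatKernel t (x + z) ^ 2
          - 2 * (heatKernel t x * heatKernel t (x + z))) := by
        congr with x
        ring
    _ = (∫ x, heatKernel t x ^ 2) + (∫ x, heatKernel t (x + z) ^ 2)
          - 2 * ∫ x, heatKernel t x * heatKernel t (x + z) := by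
        rw [integral_sub hsum (hcross.const_mul 2), integral_add hsq hshift,
          integral_const_mul]
    _ = _ := by
        rw [integral_add_right_eq_self (fun x => heatKernel t x ^ 2), integral_sq_heatKernel ht,
          integral_heatKernel_mul_heatKernel_add ht ht]
        ring

lemma integral_sq_heatKernel_sub_le (ht : 0 < t) (z : ℝ) :
    ∫ x, (heatKernel t x - heatKernel t (x + z)) ^ 2
      ≤ (|z| / (2 * π ^ (1 / 4 : ℝ)) * t ^ (-3 / 4 : ℝ)) ^ 2 := by
  have h_pi : (π ^ (1 / 4 : ℝ)) ^ 2 = π ^ (1 / 2 : ℝ) := by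
    rw [← Real.rpow_mul_natCast pi_pos.le]
    norm_num
  have ht_pow : (t ^ (-3 / 4 : ℝ)) ^ 2 = t⁻¹ * t ^ (-1 / 2 : ℝ) := by
    rw [← Real.rpow_mul_natCast ht.le, ← Real.rpow_neg_one, ← Real.rpow_add ht]
    norm_num
  have h_zero : heatKernel (t + t) 0 = (2 * π ^ (1 / 2 : ℝ))⁻¹ * t ^ (-1 / 2 : ℝ) := by
    rw [heatKernel_zero_right, show 2 * π * (t + t) = 2 ^ 2 * π * t by ring,
      Real.mul_rpow (by positivity) ht.le, Real.mul_rpow (by positivity) pi_pos.le,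
      ← Real.rpow_natCast_mul two_pos.le, mul_inv, ← Real.rpow_neg pi_pos.le]
    norm_num [Real.rpow_neg_one]
  calc ∫ x, (heatKernel t x - heatKernel t (x + z)) ^ 2
      = 2 * (heatKernel (t + t) 0 - heatKernel (t + t) z) := integral_sq_heatKernel_sub ht z
    _ ≤ 2 * (z ^ 2 / (2 * (t + t)) * heatKernel (t + t) 0) := by
        gcongr
        exact heatKernel_zero_sub_le (by positivity) z
    _ = _ := by
        rw [mul_pow, div_pow, mul_pow, sq_abs, h_pi, ht_pow, h_zero]
        field_simp
        ring

lemma eLpNorm_heatKernel_sub_le (ht : 0 < t) (z : ℝ) :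
    eLpNorm (fun x => heatKernel t x - heatKernel t (x + z)) 2
      ≤ ENNReal.ofReal (|z| / (2 * π ^ (1 / 4 : ℝ)) * t ^ (-3 / 4 : ℝ)) :=
  (eLpNorm_two_le_ofReal_iff (memLp_two_heatKernel_sub ht z) (by positivity)).2
    (integral_sq_heatKernel_sub_le ht z)

lemma rpow_mul_heatKernel_eq (t q u : ℝ) :
    u ^ q * heatKernel t u
      = (2 * π * t) ^ (-(1:ℝ)/2) * (u ^ q * Real.exp (-(2 * t)⁻¹ * u ^ 2)) := by
  rw [heatKernel, show -u ^ 2 / (2 * t) = -(2 * t)⁻¹ * u ^ 2 by ring]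
  ring

lemma integrableOn_rpow_mul_heatKernel (ht : 0 < t) (hq : -1 < q) :
    IntegrableOn (fun u => u ^ q * heatKernel t u) (Ioi 0) := by
  have hb : 0 < (2 * t)⁻¹ := by positivity
  simp_rw [rpow_mul_heatKernel_eq]
  exact (integrableOn_rpow_mul_exp_neg_mul_sq hb hq).const_mul _

lemma integral_rpow_mul_heatKernel (ht : 0 < t) (hq : -1 < q) :
    ∫ u in Ioi (0:ℝ), u ^ q * heatKernel t u
      = (2 * t) ^ (q / 2) * Real.Gamma ((q + 1) / 2) / (2 * π ^ (1 / 2 : ℝ)) := by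
  have hb : 0 < (2 * t)⁻¹ := by positivity
  have hmoment := integral_rpow_mul_exp_neg_mul_rpow two_pos hq hb
  have h_coeff : (2 * π * t) ^ (-(1:ℝ)/2) * (2 * t)⁻¹ ^ (-(q + 1) / 2)
      = (2 * t) ^ (q / 2) / π ^ (1 / 2 : ℝ) := by
    rw [show 2 * π * t = π * (2 * t) by ring, Real.mul_rpow pi_pos.le (by positivity),
      ← Real.rpow_neg_one (2 * t), ← Real.rpow_mul (by positivity), mul_assoc,
      ← Real.rpow_add (by positivity), neg_div, Real.rpow_neg pi_pos.le, div_eq_inv_mul]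
    ring_nf
  simp_rw [rpow_mul_heatKernel_eq, integral_const_mul, ← Real.rpow_two, hmoment, ← mul_assoc,
    h_coeff]
  ring

lemma lintegral_rpow_mul_heatKernel (ht : 0 < t) (hq : -1 < q) :
    ∫⁻ u in Ioi (0:ℝ), ENNReal.ofReal (u ^ q * heatKernel t u)
      = ENNReal.ofReal ((2 * t) ^ (q / 2) * Real.Gamma ((q + 1) / 2) / (2 * π ^ (1 / 2 : ℝ))) := by
  rw [← integral_rpow_mul_heatKernel ht hq,
    ofReal_integral_eq_lintegral_ofReal (integrableOn_rpow_mul_heatKernel ht hq)]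
  filter_upwards [self_mem_ae_restrict measurableSet_Ioi] with u (hu : 0 < u)
  exact mul_nonneg (Real.rpow_nonneg hu.le q) (heatKernel_nonneg ht.le u)

end HeatKernel

section BTBM

variable {s : ℝ}

lemma btbmK1_eq_integral_heatKernel (s x : ℝ) :
    btbmK1 s x = 2 * ∫ u in Ioi (0:ℝ), heatKernel u x * heatKernel s u := rfl

lemma integrableOn_heatKernel_mul_heatKernel (hs : 0 < s) (x : ℝ) :
    IntegrableOn (fun u => heatKernel u x * heatKernel s u) (Ioi 0) := by
  have hdom : IntegrableOn (fun u => heatKernel u 0 * heatKernel s u) (Ioi 0) := by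
    have hmoment : IntegrableOn (fun u => (2 * π) ^ (-(1:ℝ)/2) *
        (u ^ (-(1:ℝ)/2) * heatKernel s u)) (Ioi 0) :=
      (integrableOn_rpow_mul_heatKernel hs (by norm_num)).const_mul _
    refine hmoment.congr_fun (fun u (hu : 0 < u) => ?_) measurableSet_Ioi
    simp only [heatKernel_zero_right, Real.mul_rpow two_pi_pos.le hu.le]
    ring
  refine hdom.mono' (by fun_prop) ?_
  filter_upwards [self_mem_ae_restrict measurableSet_Ioi] with u (hu : 0 < u)
  have hs_nonneg := heatKernel_nonneg hs.le u
  rw [Real.norm_of_nonneg (mul_nonneg (heatKernel_nonneg hu.le x) hs_nonneg)]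
  exact mul_le_mul_of_nonneg_right (heatKernel_le_heatKernel_zero hu.le x) hs_nonneg

lemma btbmK1_sub_eq_integral (hs : 0 < s) (x y : ℝ) :
    btbmK1 s x - btbmK1 s y
      = 2 * ∫ u in Ioi (0:ℝ), heatKernel s u * (heatKernel u x - heatKernel u y) := by
  rw [btbmK1_eq_integral_heatKernel, btbmK1_eq_integral_heatKernel, ← mul_sub,
    ← integral_sub (integrableOn_heatKernel_mul_heatKernel hs x)
      (integrableOn_heatKernel_mul_heatKernel hs y)]
  simp_rw [← sub_mul, mul_comm (heatKernel s _)]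

lemma measurable_btbmK1 (s : ℝ) : Measurable (btbmK1 s) := by
  have hF : StronglyMeasurable
      (Function.uncurry fun x u : ℝ => heatKernel u x * heatKernel s u) :=
    Measurable.stronglyMeasurable (by fun_prop)
  exact (hF.integral_prod_right (ν := volume.restrict (Ioi 0))).measurable.const_mul 2

lemma eLpNorm_btbmK1_sub_le_lintegral (hs : 0 < s) (z : ℝ) :
    eLpNorm (fun x => btbmK1 s x - btbmK1 s (x + z)) 2
      ≤ 2 * ∫⁻ u in Ioi (0:ℝ), ENNReal.ofReal (heatKernel s u) *
          eLpNorm (fun x => heatKernel u x - heatKernel u (x + z)) 2 := by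
  have hF : StronglyMeasurable (Function.uncurry fun x u : ℝ =>
      heatKernel s u * (heatKernel u x - heatKernel u (x + z))) :=
    Measurable.stronglyMeasurable (by fun_prop)
  have eLpNorm_mul (c : ℝ) (f : ℝ → ℝ) :
      eLpNorm (fun x => c * f x) 2 = ‖c‖ₑ * eLpNorm f 2 := eLpNorm_const_smul c f 2 volume
  have enorm_heatKernel (u : ℝ) : ‖heatKernel s u‖ₑ = ENNReal.ofReal (heatKernel s u) :=
    Real.enorm_of_nonneg (heatKernel_nonneg hs.le u)
  have enorm_two : ‖(2:ℝ)‖ₑ = 2 := by simp [Real.enorm_eq_ofReal]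
  simp_rw [btbmK1_sub_eq_integral hs, eLpNorm_mul, enorm_two]
  gcongr
  simpa only [eLpNorm_mul, enorm_heatKernel] using
    eLpNorm_two_integral_le_lintegral_eLpNorm (μ := volume) (ν := volume.restrict (Ioi 0)) hF

lemma eLpNorm_btbmK1_sub_le (hs : 0 < s) (z : ℝ) :
    eLpNorm (fun x => btbmK1 s x - btbmK1 s (x + z)) 2
      ≤ ENNReal.ofReal
          (Real.Gamma (1 / 8) / (2 * π ^ (3 / 4 : ℝ)) * |z| * (2 * s) ^ (-3 / 8 : ℝ)) := by
  have h_pi : π ^ (3 / 4 : ℝ) = π ^ (1 / 4 : ℝ) * π ^ (1 / 2 : ℝ) := by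
    rw [← Real.rpow_add pi_pos]
    norm_num
  have hmoment := lintegral_rpow_mul_heatKernel hs (q := -3 / 4) (by norm_num)
  rw [show (-3 / 4 : ℝ) / 2 = -3 / 8 by norm_num,
    show ((-3 / 4 : ℝ) + 1) / 2 = 1 / 8 by norm_num] at hmoment
  calc eLpNorm (fun x => btbmK1 s x - btbmK1 s (x + z)) 2 volume
      ≤ 2 * ∫⁻ u in Ioi (0:ℝ), ENNReal.ofReal (heatKernel s u) *
          eLpNorm (fun x => heatKernel u x - heatKernel u (x + z)) 2 volume :=
        eLpNorm_btbmK1_sub_le_lintegral hs z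
    _ ≤ 2 * ∫⁻ u in Ioi (0:ℝ), ENNReal.ofReal (|z| / (2 * π ^ (1 / 4 : ℝ))) *
          ENNReal.ofReal (u ^ (-3 / 4 : ℝ) * heatKernel s u) := by
        gcongr 2 * ?_
        refine setLIntegral_mono' measurableSet_Ioi fun u (hu : 0 < u) => ?_
        rw [← ENNReal.ofReal_mul (by positivity), ← mul_assoc, mul_comm _ (heatKernel s u),
          ENNReal.ofReal_mul (heatKernel_nonneg hs.le u)]
        exact mul_le_mul_right (eLpNorm_heatKernel_sub_le hu z) _
    _ = ENNReal.ofReal (2 * (|z| / (2 * π ^ (1 / 4 : ℝ)) *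
          ((2 * s) ^ (-3 / 8 : ℝ) * Real.Gamma (1 / 8) / (2 * π ^ (1 / 2 : ℝ))))) := by
        rw [lintegral_const_mul _ (by fun_prop), hmoment, ENNReal.ofReal_mul two_pos.le,
          ENNReal.ofReal_mul (by positivity), ENNReal.ofReal_ofNat]
    _ = _ := by
        rw [h_pi]
        congr 1
        ring

lemma memLp_two_btbmK1_sub (hs : 0 < s) (z : ℝ) :
    MemLp (fun x => btbmK1 s x - btbmK1 s (x + z)) 2 :=
  ⟨((measurable_btbmK1 s).sub
      ((measurable_btbmK1 s).comp (measurable_add_const z))).aestronglyMeasurable,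
    (eLpNorm_btbmK1_sub_le hs z).trans_lt ENNReal.ofReal_lt_top⟩

lemma integral_sq_btbmK1_sub_le (hs : 0 < s) (z : ℝ) :
    ∫ x, (btbmK1 s x - btbmK1 s (x + z)) ^ 2
      ≤ 2 ^ (-3 / 4 : ℝ) * (Real.Gamma (1 / 8) / (2 * π ^ (3 / 4 : ℝ))) ^ 2 * |z| ^ 2 *
          s ^ (-3 / 4 : ℝ) := by
  refine ((eLpNorm_two_le_ofReal_iff (memLp_two_btbmK1_sub hs z) (by positivity)).1
    (eLpNorm_btbmK1_sub_le hs z)).trans_eq ?_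
  have hrpow : ((2 * s) ^ (-3 / 8 : ℝ)) ^ 2 = 2 ^ (-3 / 4 : ℝ) * s ^ (-3 / 4 : ℝ) := by
    rw [← Real.rpow_mul_natCast (by positivity), Real.mul_rpow two_pos.le hs.le]
    norm_num
  rw [mul_pow, mul_pow, hrpow]
  ring

end BTBM

theorem btbmK1_spatial_regularity :
    ∃ C : ℝ, 0 < C ∧ ∃ p : ℝ, 0 ≤ p ∧ p < 1 ∧ ∀ t z : ℝ, 0 < t →
      ∫ s in Ioo (0:ℝ) t, ∫ x : ℝ, (btbmK1 s x - btbmK1 s (x + z))^2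
        ≤ C * |z|^2 * t ^ p := by
  set A : ℝ := (Real.Gamma (1 / 8) / (2 * π ^ (3 / 4 : ℝ))) ^ 2
  refine ⟨4 * 2 ^ (-3 / 4 : ℝ) * A, by positivity, 1 / 4, by norm_num, by norm_num,
    fun t z ht => ?_⟩
  have hint : IntegrableOn (fun s : ℝ => s ^ (-3 / 4 : ℝ)) (Ioo 0 t) :=
    (intervalIntegral.integrableOn_Ioo_rpow_iff ht).2 (by norm_num)
  calc ∫ s in Ioo (0:ℝ) t, ∫ x : ℝ, (btbmK1 s x - btbmK1 s (x + z)) ^ 2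
      ≤ ∫ s in Ioo (0:ℝ) t, 2 ^ (-3 / 4 : ℝ) * A * |z| ^ 2 * s ^ (-3 / 4 : ℝ) := by
        refine integral_mono_of_nonneg
          (ae_of_all _ fun s => integral_nonneg fun x => sq_nonneg _) (hint.const_mul _) ?_
        filter_upwards [self_mem_ae_restrict measurableSet_Ioo] with s hs
        exact integral_sq_btbmK1_sub_le hs.1 z
    _ = 4 * 2 ^ (-3 / 4 : ℝ) * A * |z| ^ 2 * t ^ (1 / 4 : ℝ) := by
        rw [integral_const_mul, ← integral_Ioc_eq_integral_Ioo,
          ← intervalIntegral.integral_of_le ht.le, integral_rpow (Or.inl (by norm_num))]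
        norm_num
        ring
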